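/- arXiv:2509.21581 — 3 statements merged into one kernel-verified Lean document; each statement's English description precedes it below -/
import Mathlib

section
/- Let β be a real number and let g, h : ℝ² → ℂ be the functions g(ρ) = exp(−iπ‖ρ‖²) and h(ρ) = exp(iπ‖ρ‖²). Then for every ρ' ∈ ℝ², the Gaussian-regularized value of K_β[g](ρ') equals h(ρ'); that is, the limit as ε → 0⁺ of (i·e^β/cosh β)·exp(iπ‖ρ'‖²·tanh β)·∫_{ℝ²} exp(−πε‖ρ‖²)·exp(−iπ‖ρ‖²·tanh β)·exp(2πi(ρ'⋅ρ)/cosh β)·exp(−iπ‖ρ‖²) dρ is exp(iπ‖ρ'‖²). -/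
open MeasureTheory Filter
open scoped RealInnerProductSpace

noncomputable section

/-- The Euclidean plane `ℝ²`. -/
abbrev Plane := EuclideanSpace ℝ (Fin 2)

/-- Gaussian-regularized hyperbolic fractional Fourier transformation of the second kind:
the integrand carries the extra factor `exp (-π ε ‖ρ‖²)`. -/
def fracKreg (β ε : ℝ) (f : Plane → ℂ) (ρ' : Plane) : ℂ :=
  Complex.I * Real.exp β / Real.cosh β *
    Complex.exp (Complex.I * Real.pi * ‖ρ'‖ ^ 2 * Real.tanh β) *
    ∫ ρ : Plane,
      Complex.exp (-(Real.pi * ε * ‖ρ‖ ^ 2 : ℝ)) *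
      Complex.exp (-(Complex.I * Real.pi * ‖ρ‖ ^ 2 * Real.tanh β)) *
      Complex.exp (2 * Real.pi * Complex.I * ⟪ρ', ρ⟫ / Real.cosh β) * f ρ

/-!
Put `t = tanh β`, so that `exp β / cosh β = 1 + t` and `1 / cosh² β = 1 - t²`. Applied to the chirp
`exp (-iπa‖ρ‖²)`, the regularized transform is a Gaussian integral with quadratic coefficient
`π (ε + i (a + t))`. Its closed form is continuous in that coefficient on the slit plane, hence up
to the nonzero points of the imaginary axis, so `ε` may be set to `0` there. The phases combine to
`t + (1 - t²) / (a + t) = (1 + a t) / (a + t)`, which equals `1` when `a = 1`.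
-/

theorem exp_div_cosh (x : ℝ) : Real.exp x / Real.cosh x = 1 + Real.tanh x := by
  rw [← Real.cosh_add_sinh, add_div, div_self (Real.cosh_pos x).ne', Real.tanh_eq_sinh_div_cosh]

theorem inv_cosh_sq (x : ℝ) : (Real.cosh x ^ 2)⁻¹ = 1 - Real.tanh x ^ 2 := by
  have hcosh := (Real.cosh_pos x).ne'
  rw [Real.tanh_eq_sinh_div_cosh]
  field_simp
  exact (Real.cosh_sq_sub_sinh_sq x).symm

section GaussianIntegral

open scoped Topology

theorem mem_slitPlane_of_re_nonneg {z : ℂ} (hz : 0 ≤ z.re) (hz₀ : z ≠ 0) :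
    z ∈ Complex.slitPlane := by
  rw [Complex.mem_slitPlane_iff]
  by_contra! h
  exact hz₀ (Complex.ext (h.1.antisymm hz) h.2)

theorem tendsto_pi_mul_ofReal_add_nhdsWithin_re_pos {b : ℂ} (hb : 0 ≤ b.re) :
    Tendsto (fun ε : ℝ => (Real.pi * (ε + b) : ℂ)) (𝓝[>] 0) (𝓝[{z | 0 < z.re}] (Real.pi * b)) := by
  refine tendsto_nhdsWithin_iff.2 ⟨?_, ?_⟩
  · have hcont : Continuous fun ε : ℝ => (Real.pi * (ε + b) : ℂ) := by fun_prop
    simpa using (hcont.tendsto 0).mono_left nhdsWithin_le_nhds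
  · filter_upwards [self_mem_nhdsWithin] with ε hε
    rw [Complex.re_ofReal_mul, Complex.add_re, Complex.ofReal_re]
    exact mul_pos Real.pi_pos (add_pos_of_pos_of_nonneg hε hb)

variable {V : Type*} [NormedAddCommGroup V] [InnerProductSpace ℝ V] [FiniteDimensional ℝ V]
  [MeasurableSpace V] [BorelSpace V]

theorem tendsto_integral_cexp_neg_mul_sq_norm_add {b : ℂ} (hb : 0 ≤ b.re) (hb₀ : b ≠ 0)
    (c : ℂ) (w : V) :
    Tendsto (fun z : ℂ => ∫ v : V, Complex.exp (-z * ‖v‖ ^ 2 + c * ⟪w, v⟫))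
      (𝓝[{z | 0 < z.re}] b)
      (𝓝 ((Real.pi / b) ^ (Module.finrank ℝ V / 2 : ℂ) *
        Complex.exp (c ^ 2 * ‖w‖ ^ 2 / (4 * b)))) := by
  have hslit : (Real.pi / b : ℂ) ∈ Complex.slitPlane := by
    refine mem_slitPlane_of_re_nonneg ?_ (div_ne_zero (mod_cast Real.pi_ne_zero) hb₀)
    rw [div_eq_mul_inv, Complex.re_ofReal_mul, Complex.inv_re]
    exact mul_nonneg Real.pi_pos.le (div_nonneg hb (Complex.normSq_nonneg b))
  have hclosed : ContinuousAt (fun z : ℂ => (Real.pi / z) ^ (Module.finrank ℝ V / 2 : ℂ) *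
      Complex.exp (c ^ 2 * ‖w‖ ^ 2 / (4 * z))) b := by
    fun_prop (disch := simp [*])
  refine (hclosed.tendsto.mono_left nhdsWithin_le_nhds).congr' ?_
  filter_upwards [self_mem_nhdsWithin] with z hz
  exact (GaussianFourier.integral_cexp_neg_mul_sq_norm_add hz c w).symm

theorem tendsto_integral_cexp_neg_pi_mul_sq_norm_add {b : ℂ} (hb : 0 ≤ b.re) (hb₀ : b ≠ 0)
    (c : ℂ) (w : V) :
    Tendsto
      (fun ε : ℝ => ∫ v : V, Complex.exp (-(Real.pi * (ε + b)) * ‖v‖ ^ 2 + c * ⟪w, v⟫))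
      (𝓝[>] 0)
      (𝓝 (b⁻¹ ^ (Module.finrank ℝ V / 2 : ℂ) *
        Complex.exp (c ^ 2 * ‖w‖ ^ 2 / (4 * (Real.pi * b))))) := by
  have hpi : (Real.pi : ℂ) ≠ 0 := mod_cast Real.pi_ne_zero
  have hre : 0 ≤ (Real.pi * b).re := by
    rw [Complex.re_ofReal_mul]
    exact mul_nonneg Real.pi_pos.le hb
  rw [← div_mul_cancel_left₀ hpi b]
  exact (tendsto_integral_cexp_neg_mul_sq_norm_add hre (mul_ne_zero hpi hb₀) c w).comp
    (tendsto_pi_mul_ofReal_add_nhdsWithin_re_pos hb)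

end GaussianIntegral

theorem fracKreg_chirp (β ε : ℝ) (a : ℂ) (ρ' : Plane) :
    fracKreg β ε (fun ρ => Complex.exp (-(Complex.I * Real.pi * a * ‖ρ‖ ^ 2))) ρ' =
      Complex.I * (1 + Real.tanh β) *
        Complex.exp (Complex.I * Real.pi * ‖ρ'‖ ^ 2 * Real.tanh β) *
        ∫ ρ : Plane, Complex.exp (-(Real.pi * (ε + Complex.I * (a + Real.tanh β))) * ‖ρ‖ ^ 2 +
          2 * Real.pi * Complex.I / Real.cosh β * ⟪ρ', ρ⟫) := by
  have hcoeff : (Real.exp β / Real.cosh β : ℂ) = 1 + Real.tanh β :=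
    mod_cast exp_div_cosh β
  rw [fracKreg, mul_div_assoc, hcoeff]
  congr 2 with ρ
  simp only [← Complex.exp_add]
  congr 1
  push_cast
  ring

theorem chirp_phase {β : ℝ} {a : ℂ} (ha : a + Real.tanh β ≠ 0) (r : ℂ) :
    Complex.I * Real.pi * r ^ 2 * Real.tanh β +
        (2 * Real.pi * Complex.I / Real.cosh β) ^ 2 * r ^ 2 /
          (4 * (Real.pi * (Complex.I * (a + Real.tanh β)))) =
      Complex.I * Real.pi * r ^ 2 * ((1 + a * Real.tanh β) / (a + Real.tanh β)) := by
  have hsech : ((Real.cosh β : ℂ) ^ 2)⁻¹ = 1 - Real.tanh β ^ 2 := mod_cast inv_cosh_sq β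
  have hpi : (Real.pi : ℂ) ≠ 0 := mod_cast Real.pi_ne_zero
  rw [div_pow, div_eq_mul_inv _ ((Real.cosh β : ℂ) ^ 2), hsech]
  field_simp
  ring

theorem stmt4_general (β : ℝ) {a : ℂ} (ha : a.im ≤ 0) (ha₀ : a + Real.tanh β ≠ 0) (ρ' : Plane) :
    Tendsto (fun ε : ℝ =>
        fracKreg β ε (fun ρ => Complex.exp (-(Complex.I * Real.pi * a * ‖ρ‖ ^ 2))) ρ')
      (nhdsWithin 0 (Set.Ioi 0))
      (nhds ((1 + Real.tanh β) / (a + Real.tanh β) *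
        Complex.exp (Complex.I * Real.pi * ‖ρ'‖ ^ 2 *
          ((1 + a * Real.tanh β) / (a + Real.tanh β))))) := by
  have hre : 0 ≤ (Complex.I * (a + Real.tanh β)).re := by
    rw [Complex.I_mul_re, Complex.add_im, Complex.ofReal_im, add_zero]
    exact neg_nonneg.2 ha
  have hdim : (Module.finrank ℝ Plane / 2 : ℂ) = 1 := by simp
  have hamp : Complex.I * (1 + Real.tanh β) * (Complex.I * (a + Real.tanh β))⁻¹ =
      (1 + Real.tanh β) / (a + Real.tanh β) := by
    rw [← div_eq_mul_inv, mul_div_mul_left _ _ Complex.I_ne_zero]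
  have hintegral := tendsto_integral_cexp_neg_pi_mul_sq_norm_add hre
    (mul_ne_zero Complex.I_ne_zero ha₀) (2 * Real.pi * Complex.I / Real.cosh β) ρ'
  rw [hdim, Complex.cpow_one] at hintegral
  simp only [fracKreg_chirp]
  rw [← chirp_phase ha₀, Complex.exp_add, ← hamp, mul_mul_mul_comm]
  exact hintegral.const_mul _

/-- `K_β[g] = h` (Gaussian-regularized), where `g(ρ) = exp(−iπ‖ρ‖²)` and
`h(ρ) = exp(iπ‖ρ‖²)`. -/
theorem stmt4 (β : ℝ)
    (g h : Plane → ℂ)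
    (hg : ∀ ρ, g ρ = Complex.exp (-(Complex.I * Real.pi * ‖ρ‖ ^ 2)))
    (hh : ∀ ρ, h ρ = Complex.exp (Complex.I * Real.pi * ‖ρ‖ ^ 2))
    (ρ' : Plane) :
    Tendsto (fun ε : ℝ => fracKreg β ε g ρ')
      (nhdsWithin 0 (Set.Ioi 0)) (nhds (h ρ')) := by
  obtain rfl := funext hg
  have ht : (1 + Real.tanh β : ℂ) ≠ 0 :=
    mod_cast (neg_lt_iff_pos_add'.1 (Real.neg_one_lt_tanh β)).ne'
  simpa only [hh, mul_one, one_mul, div_self ht] using stmt4_general β (a := 1) (by simp) ht ρ'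

end
end

section
/- Let β be a real number and let g, h : ℝ² → ℂ be the functions g(ρ) = exp(−iπ‖ρ‖²) and h(ρ) = exp(iπ‖ρ‖²). Then for every ρ' ∈ ℝ², the Gaussian-regularized value of K_β[h](ρ') equals −e^{2β}·g(ρ'); that is, the limit as ε → 0⁺ of (i·e^β/cosh β)·exp(iπ‖ρ'‖²·tanh β)·∫_{ℝ²} exp(−πε‖ρ‖²)·exp(−iπ‖ρ‖²·tanh β)·exp(2πi(ρ'⋅ρ)/cosh β)·exp(iπ‖ρ‖²) dρ is −e^{2β}·exp(−iπ‖ρ'‖²). -/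
open MeasureTheory Filter
open scoped RealInnerProductSpace

noncomputable section

/-! `K_β` permutes the functions `exp (-π z ‖ρ‖²)` with `0 < z.re` up to scalars: completing the
square gives the Möbius map `z ↦ (cosh β - i z sinh β) / (z cosh β + i sinh β)` on the parameter
and the scalar `i e^β / (z cosh β + i sinh β)`. The regularization shifts `z` to `ε + z`, so the
regularized value extends to `0 ≤ z.re` by continuity away from the pole of the Möbius map. At
`z = -i`, where the denominator is `-i e^{-β}`, the parameter becomes `i` and the scalar `-e^{2β}`.
-/

section ComplexGaussian

open Complex
open scoped Real

variable {V : Type*} [NormedAddCommGroup V]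

/-- The Gaussian `exp (-π z ‖v‖²)` with complex parameter `z`; it is a chirp for imaginary `z`. -/
def complexGaussian (z : ℂ) (v : V) : ℂ :=
  exp (-(π * z * ‖v‖ ^ 2))

lemma complexGaussian_mul (z w : ℂ) (v : V) :
    complexGaussian z v * complexGaussian w v = complexGaussian (z + w) v := by
  rw [complexGaussian, complexGaussian, complexGaussian, ← exp_add]
  ring_nf

lemma continuous_complexGaussian_left (v : V) : Continuous fun z : ℂ => complexGaussian z v := by
  unfold complexGaussian
  fun_prop

lemma complexGaussian_smul [NormedSpace ℝ V] (z : ℂ) (a : ℝ) (v : V) :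
    complexGaussian z (a • v) = complexGaussian (z * a ^ 2) v := by
  have norm_sq : (‖a • v‖ : ℂ) ^ 2 = a ^ 2 * ‖v‖ ^ 2 := by
    rw [norm_smul, Real.norm_eq_abs, ofReal_mul, mul_pow]
    norm_cast
    rw [sq_abs]
  rw [complexGaussian, complexGaussian, norm_sq]
  ring_nf

lemma integral_complexGaussian_mul_exp_inner [InnerProductSpace ℝ V] [FiniteDimensional ℝ V]
    [MeasurableSpace V] [BorelSpace V] {z : ℂ} (hz : 0 < z.re) (w : V) :
    ∫ v : V, complexGaussian z v * exp (2 * π * I * ⟪w, v⟫) =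
      z⁻¹ ^ (Module.finrank ℝ V / 2 : ℂ) * complexGaussian z⁻¹ w := by
  have hπ : (π : ℂ) ≠ 0 := ofReal_ne_zero.mpr Real.pi_ne_zero
  have hz₀ : z ≠ 0 := ne_zero_of_re_pos hz
  have hπz : 0 < (π * z).re := by
    rw [re_ofReal_mul]
    exact mul_pos Real.pi_pos hz
  have base : (π / (π * z) : ℂ) = z⁻¹ := by field_simp
  have exponent : (2 * π * I) ^ 2 * (‖w‖ : ℂ) ^ 2 / (4 * (π * z)) = -(π * z⁻¹ * ‖w‖ ^ 2) := by
    simp only [mul_pow, I_sq]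
    field_simp
    ring
  simp only [complexGaussian, ← exp_add, ← neg_mul (π * z)]
  rw [GaussianFourier.integral_cexp_neg_mul_sq_norm_add hπz, base, exponent]

end ComplexGaussian

section FracKreg

open Complex
open scoped Real

/-- The denominator `z cosh β + i sinh β` of the Möbius map by which `K_β` acts on the parameters of
complex Gaussians. -/
def fracKDenom (β : ℝ) (z : ℂ) : ℂ :=
  z * Real.cosh β + I * Real.sinh β

/-- The Möbius map by which `K_β` acts on the parameters of complex Gaussians; at its pole it takes
the junk value `0`. -/
def fracKMobius (β : ℝ) (z : ℂ) : ℂ :=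
  (Real.cosh β - I * z * Real.sinh β) / fracKDenom β z

variable {β : ℝ} {z : ℂ}

lemma ofReal_cosh_ne_zero (β : ℝ) : (Real.cosh β : ℂ) ≠ 0 :=
  ofReal_ne_zero.mpr (Real.cosh_pos β).ne'

lemma fracKDenom_ne_zero (hz : 0 < z.re) : fracKDenom β z ≠ 0 := by
  have re_eq : (fracKDenom β z).re = z.re * Real.cosh β := by
    simp only [fracKDenom, add_re, re_mul_ofReal, I_re, zero_mul, add_zero]
  refine ne_zero_of_re_pos ?_
  rw [re_eq]
  exact mul_pos hz (Real.cosh_pos β)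

lemma continuous_fracKDenom (β : ℝ) : Continuous (fracKDenom β) := by
  unfold fracKDenom
  fun_prop

lemma continuousAt_fracKMobius (hz : fracKDenom β z ≠ 0) : ContinuousAt (fracKMobius β) z :=
  ContinuousAt.div (by fun_prop) (continuous_fracKDenom β).continuousAt hz

lemma add_I_mul_tanh_eq_fracKDenom_div_cosh (β : ℝ) (z : ℂ) :
    z + I * Real.tanh β = fracKDenom β z / Real.cosh β := by
  have hc := ofReal_cosh_ne_zero β
  rw [fracKDenom, Real.tanh_eq_sinh_div_cosh, ofReal_div]
  field_simp

lemma fracKMobius_eq_add (hz : fracKDenom β z ≠ 0) :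
    fracKMobius β z = -(I * Real.tanh β) + (z + I * Real.tanh β)⁻¹ * ((Real.cosh β)⁻¹ : ℝ) ^ 2 := by
  have hc := ofReal_cosh_ne_zero β
  have cosh_sq : (Real.cosh β : ℂ) ^ 2 = Real.sinh β ^ 2 + 1 := by
    exact_mod_cast Real.cosh_sq β
  rw [add_I_mul_tanh_eq_fracKDenom_div_cosh, fracKMobius, Real.tanh_eq_sinh_div_cosh, ofReal_div,
    ofReal_inv]
  field_simp
  rw [fracKDenom]
  linear_combination cosh_sq + (Real.sinh β : ℂ) ^ 2 * I_sq

lemma fracKreg_eq_integral_complexGaussian (β ε : ℝ) (f : Plane → ℂ) (ρ' : Plane) :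
    fracKreg β ε f ρ' =
      I * Real.exp β / Real.cosh β * complexGaussian (-(I * Real.tanh β)) ρ' *
        ∫ ρ : Plane, complexGaussian (ε + I * Real.tanh β) ρ *
          exp (2 * π * I * ⟪(Real.cosh β)⁻¹ • ρ', ρ⟫) * f ρ := by
  simp only [fracKreg, ← complexGaussian_mul]
  simp only [complexGaussian, real_inner_smul_left]
  push_cast
  ring_nf

theorem fracKreg_complexGaussian {ε : ℝ} (hz : 0 < (ε + z).re) (ρ' : Plane) :
    fracKreg β ε (complexGaussian z) ρ' =
      I * Real.exp β / fracKDenom β (ε + z) * complexGaussian (fracKMobius β (ε + z)) ρ' := by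
  have hd : fracKDenom β (ε + z) ≠ 0 := fracKDenom_ne_zero hz
  have re_pos : 0 < (ε + z + I * Real.tanh β).re := by
    rwa [add_re, re_mul_ofReal, I_re, zero_mul, add_zero]
  have integral_eq :
      ∫ ρ : Plane, complexGaussian (ε + I * Real.tanh β) ρ *
          exp (2 * π * I * ⟪(Real.cosh β)⁻¹ • ρ', ρ⟫) * complexGaussian z ρ =
        (ε + z + I * Real.tanh β)⁻¹ *
          complexGaussian ((ε + z + I * Real.tanh β)⁻¹ * ((Real.cosh β)⁻¹ : ℝ) ^ 2) ρ' := by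
    simp only [mul_right_comm _ _ (complexGaussian z _), complexGaussian_mul,
      add_right_comm _ _ z]
    rw [integral_complexGaussian_mul_exp_inner re_pos, complexGaussian_smul,
      finrank_euclideanSpace_fin, Nat.cast_ofNat, div_self two_ne_zero, cpow_one]
  rw [fracKreg_eq_integral_complexGaussian, integral_eq, fracKMobius_eq_add hd,
    ← complexGaussian_mul, add_I_mul_tanh_eq_fracKDenom_div_cosh]
  have hc := ofReal_cosh_ne_zero β
  field_simp

theorem tendsto_fracKreg_complexGaussian (hz : 0 ≤ z.re) (hd : fracKDenom β z ≠ 0) (ρ' : Plane) :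
    Tendsto (fun ε : ℝ => fracKreg β ε (complexGaussian z) ρ') (nhdsWithin 0 (Set.Ioi 0))
      (nhds (I * Real.exp β / fracKDenom β z * complexGaussian (fracKMobius β z) ρ')) := by
  have shift : Tendsto (fun ε : ℝ => (ε : ℂ) + z) (nhdsWithin 0 (Set.Ioi 0)) (nhds z) := by
    refine tendsto_nhdsWithin_of_tendsto_nhds ?_
    exact Continuous.tendsto' (by fun_prop) _ _ (by rw [ofReal_zero, zero_add])
  have closed_form_continuousAt : ContinuousAt
      (fun w => I * Real.exp β / fracKDenom β w * complexGaussian (fracKMobius β w) ρ') z :=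
    (continuousAt_const.div (continuous_fracKDenom β).continuousAt hd).mul
      ((continuous_complexGaussian_left ρ').continuousAt.comp (continuousAt_fracKMobius hd))
  refine (closed_form_continuousAt.tendsto.comp shift).congr' ?_
  filter_upwards [self_mem_nhdsWithin] with ε hε
  refine (fracKreg_complexGaussian ?_ ρ').symm
  rw [add_re, ofReal_re]
  exact add_pos_of_pos_of_nonneg hε hz

lemma fracKDenom_neg_I (β : ℝ) : fracKDenom β (-I) = -I * Real.exp (-β) := by
  rw [fracKDenom, ← Real.cosh_sub_sinh, ofReal_sub]
  ring

lemma fracKMobius_neg_I (β : ℝ) : fracKMobius β (-I) = I := by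
  have he : (Real.exp (-β) : ℂ) ≠ 0 := ofReal_ne_zero.mpr (Real.exp_ne_zero _)
  have numerator : (Real.cosh β - I * -I * Real.sinh β : ℂ) = Real.exp (-β) := by
    rw [← Real.cosh_sub_sinh, ofReal_sub, mul_neg, I_mul_I, neg_neg, one_mul]
  rw [fracKMobius, fracKDenom_neg_I, numerator, div_mul_cancel_right₀ he, inv_neg, inv_I, neg_neg]

lemma I_mul_exp_div_fracKDenom_neg_I (β : ℝ) :
    I * Real.exp β / fracKDenom β (-I) = -Real.exp (2 * β) := by
  rw [fracKDenom_neg_I, two_mul, Real.exp_add, Real.exp_neg, ofReal_inv, ofReal_mul]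
  field_simp [I_ne_zero]

end FracKreg

/-- `K_β[h] = −e^(2β)·g` (Gaussian-regularized), where `g(ρ) = exp(−iπ‖ρ‖²)` and
`h(ρ) = exp(iπ‖ρ‖²)`. -/
theorem stmt5 (β : ℝ)
    (g h : Plane → ℂ)
    (hg : ∀ ρ, g ρ = Complex.exp (-(Complex.I * Real.pi * ‖ρ‖ ^ 2)))
    (hh : ∀ ρ, h ρ = Complex.exp (Complex.I * Real.pi * ‖ρ‖ ^ 2))
    (ρ' : Plane) :
    Tendsto (fun ε : ℝ => fracKreg β ε h ρ')
      (nhdsWithin 0 (Set.Ioi 0)) (nhds (-(Real.exp (2 * β)) * g ρ')) := by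
  have g_eq : g ρ' = complexGaussian Complex.I ρ' := by
    rw [hg, complexGaussian, mul_comm Complex.I]
  have h_eq : h = complexGaussian (-Complex.I) := by
    ext ρ
    rw [hh, complexGaussian]
    ring_nf
  have denom_ne_zero : fracKDenom β (-Complex.I) ≠ 0 := by
    rw [fracKDenom_neg_I]
    exact mul_ne_zero (neg_ne_zero.mpr Complex.I_ne_zero)
      (Complex.ofReal_ne_zero.mpr (Real.exp_ne_zero _))
  have re_nonneg : 0 ≤ (-Complex.I).re := by rw [Complex.neg_re, Complex.I_re, neg_zero]
  have transform := tendsto_fracKreg_complexGaussian re_nonneg denom_ne_zero ρ'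
  rwa [I_mul_exp_div_fracKDenom_neg_I, fracKMobius_neg_I, ← h_eq, ← g_eq] at transform

end
end

section
/- Let β and β' be real numbers with β ≠ β', and let f ∈ 𝓢(ℝ², ℂ). Then for every ρ'' ∈ ℝ², K_{β'}[K_β[f]](ρ'') = −e^{2β'}·H_{β−β'}[f̃](ρ''), where f̃(ρ) = f(−ρ) is the symmetrized function and the outer transformation K_{β'} is applied to the function ρ' ↦ K_β[f](ρ'). That is, K_{β'} ∘ K_β = −e^{2β'}·H_{β−β'} ∘ 𝒫, where 𝒫 is the parity operator. -/
open MeasureTheory Filter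
open scoped RealInnerProductSpace

noncomputable section

/-- Hyperbolic fractional-order Fourier transformation of the first kind of order `β`
(for `β ≠ 0`), with `coth β = cosh β / sinh β`. -/
def fracH (β : ℝ) (f : Plane → ℂ) (ρ' : Plane) : ℂ :=
  Complex.I * Real.exp β / Real.sinh β *
    Complex.exp (-(Complex.I * Real.pi * ‖ρ'‖ ^ 2 * (Real.cosh β / Real.sinh β))) *
    ∫ ρ : Plane,
      Complex.exp (-(Complex.I * Real.pi * ‖ρ‖ ^ 2 * (Real.cosh β / Real.sinh β))) *
      Complex.exp (2 * Real.pi * Complex.I * ⟪ρ', ρ⟫ / Real.sinh β) * f ρ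

/-- Hyperbolic fractional-order Fourier transformation of the second kind of order `β`. -/
def fracK (β : ℝ) (f : Plane → ℂ) (ρ' : Plane) : ℂ :=
  Complex.I * Real.exp β / Real.cosh β *
    Complex.exp (Complex.I * Real.pi * ‖ρ'‖ ^ 2 * Real.tanh β) *
    ∫ ρ : Plane,
      Complex.exp (-(Complex.I * Real.pi * ‖ρ‖ ^ 2 * Real.tanh β)) *
      Complex.exp (2 * Real.pi * Complex.I * ⟪ρ', ρ⟫ / Real.cosh β) * f ρ

/-!
Up to a constant factor, `fracK` and `fracH` are linear canonical transforms: a dilated Fourier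
transform between multiplications by chirps `e^{iπa‖v‖²}`. When two such transforms are composed,
the two inner chirps merge into a single one with parameter `s = tanh β - tanh β'`, and moving the
Fourier transform onto it turns it into the chirp with parameter `-1 / s`. Expanding the square in
that chirp exhibits the composition as another linear canonical transform, and the addition formulas
identify its parameters with those of `fracH (β - β')`, except for the sign of the cross term: this
is the parity operator.
-/

open scoped FourierTransform

section Chirp

variable {V E : Type*} [NormedAddCommGroup V] [NormedAddCommGroup E] [NormedSpace ℂ E]

/-- The quadratic phase factor `e^{iπτ‖v‖²}`. It is unimodular for real `τ` and a Gaussian for `τ`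
in the upper half-plane. -/
def chirp (τ : ℂ) (v : V) : ℂ :=
  Complex.exp (Complex.I * Real.pi * τ * ‖v‖ ^ 2)

lemma chirp_zero (v : V) : chirp 0 v = 1 := by
  simp [chirp]

lemma chirp_add_left (σ τ : ℂ) (v : V) : chirp (σ + τ) v = chirp σ v * chirp τ v := by
  rw [chirp, chirp, chirp, ← Complex.exp_add]
  ring_nf

lemma continuous_chirp (τ : ℂ) : Continuous (chirp τ : V → ℂ) := by
  unfold chirp
  fun_prop

lemma continuous_chirp_left (v : V) : Continuous fun τ => chirp τ v := by
  unfold chirp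
  fun_prop

lemma norm_chirp_le_one {τ : ℂ} (hτ : 0 ≤ τ.im) (v : V) : ‖chirp τ v‖ ≤ 1 := by
  have hre : (Complex.I * Real.pi * τ * ‖v‖ ^ 2).re = -(Real.pi * τ.im * ‖v‖ ^ 2) := by
    simp [← Complex.ofReal_pow]
  rw [chirp, Complex.norm_exp, Real.exp_le_one_iff, hre, neg_nonpos]
  positivity

lemma continuousOn_integral_chirp_smul {α : Type*} [MeasurableSpace α] {μ : Measure α} {u : α → V}
    (hu : AEStronglyMeasurable u μ) {F : α → E} (hF : Integrable F μ) :
    ContinuousOn (fun τ : ℂ => ∫ a, chirp τ (u a) • F a ∂μ) {τ | 0 ≤ τ.im} := by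
  refine continuousOn_of_dominated (bound := fun a => ‖F a‖) (fun τ _ => ?_) (fun τ hτ => ?_)
    hF.norm (.of_forall fun a => ?_)
  · exact ((continuous_chirp τ).comp_aestronglyMeasurable hu).smul hF.aestronglyMeasurable
  · refine .of_forall fun a => ?_
    rw [norm_smul]
    exact mul_le_of_le_one_left (norm_nonneg _) (norm_chirp_le_one hτ _)
  · exact ((continuous_chirp_left (u a)).smul continuous_const).continuousOn

section Integrable

variable [MeasurableSpace V] [OpensMeasurableSpace V] {μ : Measure V}

lemma integrable_chirp_smul {τ : ℂ} (hτ : 0 ≤ τ.im) {F : V → E} (hF : Integrable F μ) :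
    Integrable (fun v => chirp τ v • F v) μ :=
  hF.bdd_smul 1 (continuous_chirp τ).aestronglyMeasurable (.of_forall (norm_chirp_le_one hτ))

lemma integrable_chirp_ofReal_smul_iff {a : ℝ} {F : V → E} :
    Integrable (fun v => chirp a v • F v) μ ↔ Integrable F μ := by
  refine ⟨fun h => ?_, integrable_chirp_smul (Complex.ofReal_im a).ge⟩
  refine (integrable_chirp_smul (Complex.ofReal_im (-a)).ge h).congr (.of_forall fun v => ?_)
  simp only [smul_smul, ← chirp_add_left, Complex.ofReal_neg, neg_add_cancel, chirp_zero, one_smul]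

end Integrable

end Chirp

section ChirpInner

variable {V : Type*} [NormedAddCommGroup V] [InnerProductSpace ℝ V]

lemma chirp_smul (τ : ℂ) (c : ℝ) (v : V) : chirp τ (c • v) = chirp (c ^ 2 * τ) v := by
  rw [chirp, chirp, norm_smul, ← Complex.ofReal_pow, mul_pow, Real.norm_eq_abs, sq_abs]
  push_cast
  ring_nf

lemma chirp_add_right (τ : ℂ) (v w : V) :
    chirp τ (v + w) =
      chirp τ v * Complex.exp (2 * Real.pi * Complex.I * (τ * ⟪v, w⟫)) * chirp τ w := by
  simp only [chirp, ← Complex.exp_add, ← Complex.ofReal_pow, norm_add_sq_real]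
  congr 1
  push_cast
  ring

lemma chirp_neg_one_div_smul_add_smul (s b c : ℝ) (v w : V) :
    chirp (-1 / s : ℂ) (b • v + c • w) =
      chirp ((-(b ^ 2 / s) : ℝ) : ℂ) v *
        Complex.exp (2 * Real.pi * Complex.I * ⟪(-(b * c / s)) • v, w⟫) *
          chirp ((-(c ^ 2 / s) : ℝ) : ℂ) w := by
  rw [chirp_add_right, chirp_smul, chirp_smul, real_inner_smul_left, real_inner_smul_right,
    real_inner_smul_left]
  congr 2 <;> push_cast
  · congr 1; ring
  · ring_nf
  · ring_nf

lemma hasTemperateGrowth_cexp_mul_I :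
    (fun x : ℝ => Complex.exp (x * Complex.I)).HasTemperateGrowth := by
  have hiter (n : ℕ) : iteratedDeriv n (fun x : ℝ => Complex.exp (x * Complex.I)) =
      fun x : ℝ => Complex.I ^ n * Complex.exp (x * Complex.I) := by
    induction n with
    | zero => simp
    | succ n ih =>
      rw [iteratedDeriv_succ, ih]
      funext x
      have h := (((hasDerivAt_id x).ofReal_comp.mul_const Complex.I).cexp).const_mul
        (Complex.I ^ n)
      refine (h.congr_deriv ?_).deriv
      simp only [id, Complex.ofReal_one]
      ring
  refine ⟨(Complex.ofRealCLM.contDiff.mul contDiff_const).cexp, fun n => ⟨0, 1, fun x => ?_⟩⟩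
  rw [norm_iteratedFDeriv_eq_norm_iteratedDeriv, hiter]
  simp [Complex.norm_exp_ofReal_mul_I]

lemma hasTemperateGrowth_chirp (a : ℝ) : (chirp a : V → ℂ).HasTemperateGrowth := by
  have hchirp : (chirp a : V → ℂ) =
      (fun x : ℝ => Complex.exp (x * Complex.I)) ∘ fun v => Real.pi * a * ‖v‖ ^ 2 := by
    funext v
    simp only [chirp, Function.comp_apply]
    push_cast
    ring_nf
  rw [hchirp]
  exact hasTemperateGrowth_cexp_mul_I.comp
    ((Function.HasTemperateGrowth.const _).mul (Function.hasTemperateGrowth_norm_sq V))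

end ChirpInner

section HalfPlane

lemma im_neg_one_div_nonneg {τ : ℂ} (hτ : 0 ≤ τ.im) : 0 ≤ (-1 / τ).im := by
  have him : (-1 / τ).im = τ.im / Complex.normSq τ := by
    simp [neg_div]
  rw [him]
  exact div_nonneg hτ (Complex.normSq_nonneg τ)

lemma I_div_mem_slitPlane {τ : ℂ} (hτ : 0 ≤ τ.im) (hτ0 : τ ≠ 0) :
    Complex.I / τ ∈ Complex.slitPlane := by
  have hre : (Complex.I / τ).re = τ.im / Complex.normSq τ := by simp [Complex.div_re]
  have him : (Complex.I / τ).im = τ.re / Complex.normSq τ := by simp [Complex.div_im]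
  have hpos : 0 < Complex.normSq τ := Complex.normSq_pos.mpr hτ0
  rw [Complex.mem_slitPlane_iff, hre, him]
  rcases hτ.lt_or_eq with h | h
  · exact .inl (div_pos h hpos)
  · exact .inr (div_ne_zero (fun h' => hτ0 (Complex.ext h' h.symm)) hpos.ne')

end HalfPlane

section GaussianPairing

variable {V E : Type*} [NormedAddCommGroup V] [InnerProductSpace ℝ V] [FiniteDimensional ℝ V]
  [MeasurableSpace V] [BorelSpace V] [NormedAddCommGroup E] [NormedSpace ℂ E]

lemma integrable_chirp_mul_cexp_inner {τ : ℂ} (hτ : 0 < τ.im) (w : V) :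
    Integrable fun v => chirp τ v * Complex.exp (2 * Real.pi * Complex.I * ⟪w, v⟫) := by
  have hre : 0 < (-(Complex.I * Real.pi * τ)).re := by simpa using mul_pos Real.pi_pos hτ
  refine (GaussianFourier.integrable_cexp_neg_mul_sq_norm_add hre (2 * Real.pi * Complex.I)
    w).congr (.of_forall fun v => ?_)
  simp only [chirp, neg_neg, Complex.exp_add]

lemma fourierInv_chirp_mul_cexp_inner {τ : ℂ} (hτ : 0 < τ.im) (w ξ : V) :
    𝓕⁻ (fun v => chirp τ v * Complex.exp (2 * Real.pi * Complex.I * ⟪w, v⟫)) ξ =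
      (Complex.I / τ) ^ (Module.finrank ℝ V / 2 : ℂ) * chirp (-1 / τ) (w + ξ) := by
  have hre : 0 < (-(Complex.I * Real.pi * τ)).re := by simpa using mul_pos Real.pi_pos hτ
  have hτ0 : τ ≠ 0 := by rintro rfl; simp at hτ
  have hpi : (Real.pi : ℂ) ≠ 0 := Complex.ofReal_ne_zero.mpr Real.pi_ne_zero
  have hdiv : (Real.pi : ℂ) / -(Complex.I * Real.pi * τ) = Complex.I / τ := by
    field_simp
    simp
  have hgauss := fourier_gaussian_innerProductSpace' hre w (-ξ)
  simp only [neg_neg, sub_neg_eq_add, Complex.exp_add, hdiv] at hgauss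
  rw [Real.fourierInv_eq_fourier_neg]
  refine hgauss.trans ?_
  congr 2
  calc -(Real.pi : ℂ) ^ 2 * ‖w + ξ‖ ^ 2 / -(Complex.I * Real.pi * τ)
      = -Real.pi * ‖w + ξ‖ ^ 2 * (Real.pi / -(Complex.I * Real.pi * τ)) := by ring
    _ = Complex.I * Real.pi * (-1 / τ) * ‖w + ξ‖ ^ 2 := by rw [hdiv]; ring

variable [CompleteSpace E]

lemma integral_smul_fourierInv_smul {φ : V → ℂ} (hφ : Integrable φ) {g : V → E}
    (hg : Integrable g) (c : ℝ) :
    ∫ x, φ x • 𝓕⁻ g (c • x) = ∫ y, 𝓕⁻ φ (c • y) • g y := by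
  have hcont : Continuous fun p : V × V => (-(c • innerₗ V)) p.1 p.2 := by
    simp only [LinearMap.neg_apply, LinearMap.smul_apply, innerₗ_apply_apply]
    fun_prop
  have hflip := VectorFourier.integral_fourierIntegral_smul_eq_flip Real.continuous_fourierChar
    hcont hφ hg
  simp only [VectorFourier.fourierIntegral, LinearMap.flip_apply, LinearMap.neg_apply,
    LinearMap.smul_apply, innerₗ_apply_apply, neg_neg, smul_eq_mul] at hflip
  have hcomm (x y : V) : ⟪x, c • y⟫ = c * ⟪y, x⟫ := by
    rw [real_inner_smul_right, real_inner_comm]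
  simp only [real_inner_comm] at hflip
  simp only [Real.fourierInv_eq, hcomm]
  exact hflip.symm

lemma integral_chirp_smul_fourierInv_of_im_pos {τ : ℂ} (hτ : 0 < τ.im) {g : V → E}
    (hg : Integrable g) (c : ℝ) (w : V) :
    ∫ x, chirp τ x • Complex.exp (2 * Real.pi * Complex.I * ⟪w, x⟫) • 𝓕⁻ g (c • x) =
      (Complex.I / τ) ^ (Module.finrank ℝ V / 2 : ℂ) •
        ∫ y, chirp (-1 / τ) (w + c • y) • g y := by
  simp only [← mul_smul]
  rw [integral_smul_fourierInv_smul (integrable_chirp_mul_cexp_inner hτ w) hg]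
  simp only [fourierInv_chirp_mul_cexp_inner hτ, mul_smul, integral_smul]

-- On the real axis the chirp is not integrable, so the identity is extended there by continuity
-- in `τ` of both sides.
lemma integral_chirp_smul_fourierInv {τ : ℂ} (hτ : 0 ≤ τ.im) (hτ0 : τ ≠ 0) {g : V → E}
    (hg : Integrable g) {c : ℝ} (hG : Integrable fun x => 𝓕⁻ g (c • x)) (w : V) :
    ∫ x, chirp τ x • Complex.exp (2 * Real.pi * Complex.I * ⟪w, x⟫) • 𝓕⁻ g (c • x) =
      (Complex.I / τ) ^ (Module.finrank ℝ V / 2 : ℂ) •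
        ∫ y, chirp (-1 / τ) (w + c • y) • g y := by
  let S : Set ℂ := {τ | 0 ≤ τ.im ∧ τ ≠ 0}
  have hmod : Integrable fun x =>
      Complex.exp (2 * Real.pi * Complex.I * ⟪w, x⟫) • 𝓕⁻ g (c • x) := by
    refine hG.bdd_smul 1 (Continuous.aestronglyMeasurable (by fun_prop)) (.of_forall fun x => ?_)
    simp [Complex.norm_exp]
  have hleft := continuousOn_integral_chirp_smul aestronglyMeasurable_id hmod
  have hpow : ContinuousOn (fun τ : ℂ => (Complex.I / τ) ^ (Module.finrank ℝ V / 2 : ℂ)) S :=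
    (continuousOn_const.div continuousOn_id fun τ hτ => hτ.2).cpow_const
      fun τ hτ => I_div_mem_slitPlane hτ.1 hτ.2
  have hinv : ContinuousOn (fun τ : ℂ => -1 / τ) S :=
    continuousOn_const.div continuousOn_id fun τ hτ => hτ.2
  have hright := (continuousOn_integral_chirp_smul (u := fun y => w + c • y)
    (Continuous.aestronglyMeasurable (by fun_prop)) hg).comp hinv
      fun τ hτ => im_neg_one_div_nonneg hτ.1
  have hinterior : {τ : ℂ | 0 < τ.im} ⊆ S := fun τ (hτ : 0 < τ.im) =>
    ⟨hτ.le, fun h => hτ.ne' (congrArg Complex.im h)⟩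
  have hclosure : S ⊆ closure {τ : ℂ | 0 < τ.im} := by
    rw [Complex.closure_setOfPred_lt_im]
    exact fun τ hτ => hτ.1
  exact Set.EqOn.of_subset_closure
    (fun τ hτ => integral_chirp_smul_fourierInv_of_im_pos hτ hg c w)
    (hleft.mono fun τ hτ => hτ.1) (hpow.smul hright) hinterior hclosure ⟨hτ, hτ0⟩

end GaussianPairing

section LinearCanonicalTransform

variable {V E : Type*} [NormedAddCommGroup V] [InnerProductSpace ℝ V] [FiniteDimensional ℝ V]
  [MeasurableSpace V] [BorelSpace V] [NormedAddCommGroup E] [NormedSpace ℂ E]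

/-- The (unnormalized) linear canonical transform with kernel `e^{iπ(a‖z‖² + 2b⟪y, z⟫ + d‖y‖²)}`:
a Fourier transform dilated by `b`, between multiplications by chirps. Both families of hyperbolic
fractional Fourier transforms consist of multiples of such operators. -/
def linearCanonicalTransform (a b d : ℝ) (f : V → E) (z : V) : E :=
  chirp a z • 𝓕⁻ (fun y => chirp d y • f y) (b • z)

lemma linearCanonicalTransform_eq_integral (a b d : ℝ) (f : V → E) (z : V) :
    linearCanonicalTransform a b d f z = chirp a z •
      ∫ y, Complex.exp (2 * Real.pi * Complex.I * ⟪b • z, y⟫) • chirp d y • f y := by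
  rw [linearCanonicalTransform, Real.fourierInv_eq']
  congr 1
  refine integral_congr_ae (.of_forall fun y => ?_)
  simp only [real_inner_comm y]
  congr 2
  push_cast
  ring

lemma linearCanonicalTransform_eq_integral_mul (a b d : ℝ) (f : V → ℂ) (z : V) :
    linearCanonicalTransform a b d f z = Complex.exp (Complex.I * Real.pi * ‖z‖ ^ 2 * a) *
      ∫ y, Complex.exp (Complex.I * Real.pi * ‖y‖ ^ 2 * d) *
        Complex.exp (2 * Real.pi * Complex.I * ⟪z, y⟫ * b) * f y := by
  rw [linearCanonicalTransform_eq_integral]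
  simp only [chirp, real_inner_smul_left, smul_eq_mul]
  congr 2
  · ring
  · funext y
    push_cast
    ring_nf

lemma linearCanonicalTransform_const_smul (a b d : ℝ) (r : ℂ) (f : V → E) (z : V) :
    linearCanonicalTransform a b d (fun y => r • f y) z =
      r • linearCanonicalTransform a b d f z := by
  simp only [linearCanonicalTransform_eq_integral, smul_comm _ r, integral_smul]

lemma linearCanonicalTransform_comp_neg (a b d : ℝ) (f : V → E) (z : V) :
    linearCanonicalTransform a b d (fun y => f (-y)) z =
      linearCanonicalTransform a (-b) d f z := by
  rw [linearCanonicalTransform_eq_integral, linearCanonicalTransform_eq_integral,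
    ← integral_neg_eq_self]
  simp only [chirp, norm_neg, neg_neg, neg_smul, inner_neg_left, inner_neg_right]

theorem linearCanonicalTransform_linearCanonicalTransform [CompleteSpace E] {a b d a' b' d' : ℝ}
    (hs : a + d' ≠ 0) {f : V → E} (hf : Integrable f)
    (hTf : Integrable (linearCanonicalTransform a b d f)) (z : V) :
    linearCanonicalTransform a' b' d' (linearCanonicalTransform a b d f) z =
      (Complex.I / (a + d' : ℝ)) ^ (Module.finrank ℝ V / 2 : ℂ) •
        linearCanonicalTransform (a' - b' ^ 2 / (a + d')) (-(b' * b / (a + d')))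
          (d - b ^ 2 / (a + d')) f z := by
  set s := a + d' with hs_def
  have hg : Integrable fun y => chirp d y • f y := integrable_chirp_ofReal_smul_iff.mpr hf
  have hG : Integrable fun x => 𝓕⁻ (fun y => chirp d y • f y) (b • x) :=
    integrable_chirp_ofReal_smul_iff.mp hTf
  have hmerge (x : V) (v : E) : chirp d' x • chirp a x • v = chirp (s : ℂ) x • v := by
    rw [smul_smul, ← chirp_add_left, hs_def, Complex.ofReal_add, add_comm]
  calc linearCanonicalTransform a' b' d' (linearCanonicalTransform a b d f) z
      = chirp a' z • ∫ x, chirp (s : ℂ) x •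
          Complex.exp (2 * Real.pi * Complex.I * ⟪b' • z, x⟫) •
            𝓕⁻ (fun y => chirp d y • f y) (b • x) := by
        rw [linearCanonicalTransform_eq_integral]
        simp only [linearCanonicalTransform, hmerge, smul_comm (chirp (s : ℂ) _)]
    _ = chirp a' z • (Complex.I / s) ^ (Module.finrank ℝ V / 2 : ℂ) •
          ∫ y, chirp (-1 / s : ℂ) (b' • z + b • y) • chirp d y • f y := by
        rw [integral_chirp_smul_fourierInv (Complex.ofReal_im s).ge (Complex.ofReal_ne_zero.mpr hs)
          hg hG]
    _ = _ := by
        simp only [linearCanonicalTransform_eq_integral, chirp_neg_one_div_smul_add_smul,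
          sub_eq_add_neg, Complex.ofReal_add, chirp_add_left, mul_smul,
          integral_smul, smul_comm (chirp d _)]
        rw [smul_comm (chirp (a' : ℂ) z)]

lemma integrable_linearCanonicalTransform [CompleteSpace E] (a : ℝ) {b : ℝ} (hb : b ≠ 0) (d : ℝ)
    (f : SchwartzMap V E) : Integrable (linearCanonicalTransform a b d f) := by
  have hcoe : (fun y => chirp (d : ℂ) y • f y) = SchwartzMap.smulLeftCLM E (chirp (d : ℂ)) f :=
    (SchwartzMap.smulLeftCLM_apply (hasTemperateGrowth_chirp d) f).symm
  unfold linearCanonicalTransform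
  rw [integrable_chirp_ofReal_smul_iff, hcoe, ← SchwartzMap.fourierInv_coe]
  exact (𝓕⁻ (SchwartzMap.smulLeftCLM E (chirp (d : ℂ)) f)).integrable.comp_smul hb

end LinearCanonicalTransform

section Hyperbolic

lemma tanh_sub_tanh (x y : ℝ) :
    Real.tanh x - Real.tanh y = Real.sinh (x - y) / (Real.cosh x * Real.cosh y) := by
  have hx := (Real.cosh_pos x).ne'
  have hy := (Real.cosh_pos y).ne'
  rw [Real.tanh_eq_sinh_div_cosh, Real.tanh_eq_sinh_div_cosh, Real.sinh_sub]
  field_simp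

lemma tanh_sub_inv_cosh_sq_div {x y : ℝ} (hxy : x ≠ y) :
    Real.tanh y - (Real.cosh y)⁻¹ ^ 2 / (Real.tanh x - Real.tanh y) =
      -(Real.cosh (x - y) / Real.sinh (x - y)) := by
  have hy := (Real.cosh_pos y).ne'
  have hsinh : Real.sinh (x - y) ≠ 0 := by simpa [sub_eq_zero] using hxy
  have hcosh : Real.cosh (x - y) * Real.cosh y =
      Real.cosh x - Real.sinh y * Real.sinh (x - y) := by
    rw [Real.cosh_sub, Real.sinh_sub]
    linear_combination Real.cosh x * Real.cosh_sq y
  rw [tanh_sub_tanh, Real.tanh_eq_sinh_div_cosh]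
  field_simp
  linear_combination hcosh

lemma neg_tanh_sub_inv_cosh_sq_div {x y : ℝ} (hxy : x ≠ y) :
    -Real.tanh x - (Real.cosh x)⁻¹ ^ 2 / (Real.tanh x - Real.tanh y) =
      -(Real.cosh (x - y) / Real.sinh (x - y)) := by
  have hswap := tanh_sub_inv_cosh_sq_div hxy.symm
  rw [← neg_sub x y, Real.cosh_neg, Real.sinh_neg, ← neg_sub (Real.tanh x), div_neg,
    div_neg] at hswap
  linear_combination -hswap

lemma inv_cosh_mul_inv_cosh_div (x y : ℝ) :
    (Real.cosh y)⁻¹ * (Real.cosh x)⁻¹ / (Real.tanh x - Real.tanh y) = (Real.sinh (x - y))⁻¹ := by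
  have hx := (Real.cosh_pos x).ne'
  have hy := (Real.cosh_pos y).ne'
  rw [tanh_sub_tanh]
  field_simp

lemma fracK_amplitude_mul (x y : ℝ) :
    Complex.I * Real.exp y / Real.cosh y * (Complex.I * Real.exp x / Real.cosh x *
        (Complex.I / (Real.tanh x - Real.tanh y : ℝ))) =
      -(Real.exp (2 * y)) * (Complex.I * Real.exp (x - y) / Real.sinh (x - y)) := by
  have hinv : (Real.cosh y : ℂ)⁻¹ * (Real.cosh x : ℂ)⁻¹ / (Real.tanh x - Real.tanh y : ℝ) =
      (Real.sinh (x - y) : ℂ)⁻¹ := mod_cast inv_cosh_mul_inv_cosh_div x y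
  have hexp : (Real.exp y : ℂ) * Real.exp x = Real.exp (2 * y) * Real.exp (x - y) := by
    rw [← Complex.ofReal_mul, ← Complex.ofReal_mul, ← Real.exp_add, ← Real.exp_add]
    ring_nf
  calc _ = Complex.I ^ 3 * (Real.exp y * Real.exp x) *
        ((Real.cosh y : ℂ)⁻¹ * (Real.cosh x : ℂ)⁻¹ / (Real.tanh x - Real.tanh y : ℝ)) := by ring
    _ = _ := by rw [hinv, hexp, Complex.I_pow_three]; ring

lemma fracK_eq_linearCanonicalTransform (β : ℝ) (f : Plane → ℂ) (ρ : Plane) :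
    fracK β f ρ = (Complex.I * Real.exp β / Real.cosh β) •
      linearCanonicalTransform (Real.tanh β) (Real.cosh β)⁻¹ (-Real.tanh β) f ρ := by
  rw [fracK, linearCanonicalTransform_eq_integral_mul, smul_eq_mul, mul_assoc]
  push_cast
  simp only [div_eq_mul_inv, mul_neg]

lemma fracH_eq_linearCanonicalTransform (β : ℝ) (f : Plane → ℂ) (ρ : Plane) :
    fracH β f ρ = (Complex.I * Real.exp β / Real.sinh β) •
      linearCanonicalTransform (-(Real.cosh β / Real.sinh β)) (Real.sinh β)⁻¹
        (-(Real.cosh β / Real.sinh β)) f ρ := by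
  rw [fracH, linearCanonicalTransform_eq_integral_mul, smul_eq_mul, mul_assoc]
  push_cast
  simp only [div_eq_mul_inv, mul_neg]

lemma integrable_fracK_iff {β : ℝ} {f : Plane → ℂ} :
    Integrable (fracK β f) ↔
      Integrable (linearCanonicalTransform (Real.tanh β) (Real.cosh β)⁻¹ (-Real.tanh β) f) := by
  have hamp : Complex.I * Real.exp β / Real.cosh β ≠ 0 :=
    div_ne_zero (mul_ne_zero Complex.I_ne_zero (mod_cast Real.exp_ne_zero β))
      (Complex.ofReal_ne_zero.mpr (Real.cosh_pos β).ne')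
  rw [funext (fracK_eq_linearCanonicalTransform β f)]
  exact integrable_fun_smul_iff hamp _

lemma integrable_fracK (β : ℝ) (f : SchwartzMap Plane ℂ) : Integrable (fracK β f) :=
  integrable_fracK_iff.mpr
    (integrable_linearCanonicalTransform _ (inv_ne_zero (Real.cosh_pos β).ne') _ f)

end Hyperbolic

theorem stmt8_general (β β' : ℝ) (hne : β ≠ β') {f : Plane → ℂ} (hf : Integrable f)
    (hKf : Integrable (fracK β f)) (ρ'' : Plane) :
    fracK β' (fun ρ' => fracK β f ρ') ρ'' =
      -(Real.exp (2 * β')) * fracH (β - β') (fun ρ => f (-ρ)) ρ'' := by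
  have hs : Real.tanh β + -Real.tanh β' ≠ 0 := by
    rw [← sub_eq_add_neg, sub_ne_zero]
    exact Real.tanh_injective.ne hne
  simp only [fracK_eq_linearCanonicalTransform, fracH_eq_linearCanonicalTransform]
  rw [linearCanonicalTransform_const_smul,
    linearCanonicalTransform_linearCanonicalTransform hs hf (integrable_fracK_iff.mp hKf),
    linearCanonicalTransform_comp_neg, ← sub_eq_add_neg, tanh_sub_inv_cosh_sq_div hne,
    neg_tanh_sub_inv_cosh_sq_div hne, inv_cosh_mul_inv_cosh_div, finrank_euclideanSpace_fin,
    Nat.cast_ofNat, div_self two_ne_zero, Complex.cpow_one]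
  simp only [smul_eq_mul, ← mul_assoc]
  rw [← fracK_amplitude_mul]
  ring

/-- Composition of two hyperbolic transformations of the second kind:
`K_{β'} ∘ K_β = −e^(2β')·H_{β−β'} ∘ 𝒫` (for `β ≠ β'`), where `𝒫` is the parity operator. -/
theorem stmt8 (β β' : ℝ) (hne : β ≠ β')
    (f : SchwartzMap Plane ℂ) (ρ'' : Plane) :
    fracK β' (fun ρ' => fracK β (⇑f) ρ') ρ'' =
      -(Real.exp (2 * β')) * fracH (β - β') (fun ρ => f (-ρ)) ρ'' := by
  exact stmt8_general β β' hne f.integrable (integrable_fracK β f) ρ''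

end
end
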